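/- arXiv:2004.10893 — 2 statements merged into one kernel-verified Lean document; each statement's English description precedes it below -/
import Mathlib

section
/- There exist finite simple graphs G and H on 16 vertices such that G ≅_{DNN} H (there exists a DNN-isomorphism matrix for G to H) but G and H are not quantum isomorphic: there do not exist d ≥ 1 and orthogonal projections P_{gh} ∈ ℂ^{d×d} for g ∈ V_G, h ∈ V_H with Σ_{h∈V_H} P_{gh} = I for all g, Σ_{g∈V_G} P_{gh} = I for all h, and P_{gh} P_{g'h'} = 0 whenever rel(g,g') ≠ rel(h,h'). (One may take G to be the Cartesian product K_4 □ K_4 and H the Shrikhande graph.) -/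
open Matrix BigOperators
open scoped ComplexOrder

/-- `rel(g,g') = rel(h,h')`. -/
def relEq {α β : Type*} (G : SimpleGraph α) (H : SimpleGraph β)
    (g g' : α) (h h' : β) : Prop :=
  (g = g' ↔ h = h') ∧ (G.Adj g g' ↔ H.Adj h h')

/-- `M` satisfies the linear constraints of an isomorphism matrix for `G` to `H`. -/
def IsIsoMatrix {α β : Type*} [Fintype α] [Fintype β]
    (G : SimpleGraph α) (H : SimpleGraph β)
    (M : Matrix (α × β) (α × β) ℝ) : Prop :=
  (∀ g g' : α, ∑ h : β, ∑ h' : β, M (g, h) (g', h') = 1) ∧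
  (∀ h h' : β, ∑ g : α, ∑ g' : α, M (g, h) (g', h') = 1) ∧
  (∀ g g' h h', ¬ relEq G H g g' h h' → M (g, h) (g', h') = 0)

/-- `G` and `H` are quantum isomorphic. -/
def QuantumIso {α β : Type*} [Fintype α] [Fintype β]
    (G : SimpleGraph α) (H : SimpleGraph β) : Prop :=
  ∃ d : ℕ, 0 < d ∧ ∃ P : α → β → Matrix (Fin d) (Fin d) ℂ,
    (∀ g h, (P g h).IsHermitian ∧ P g h * P g h = P g h) ∧
    (∀ g, ∑ h, P g h = 1) ∧
    (∀ h, ∑ g, P g h = 1) ∧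
    (∀ g g' h h', ¬ relEq G H g g' h h' → P g h * P g' h' = 0)

/-!
Both graphs are strongly regular with parameters `(16, 6, 2, 2)`, and the `DNN`-isomorphism matrix
exists for any two strongly regular graphs with common parameters `(n, k, ℓ, μ)`. The algebra
spanned by the identity, the adjacency matrix and the all-ones matrix `J` is commutative with
structure constants depending on the parameters only. Let `P = 1 - J / n`, and let `D` be the
adjacency matrix projected onto the orthogonal complement of `1` and `J`. Then `D² = tD + qP`, so
`D` has eigenvalues `r > 0 > s` on the range of `P`, with `rs = -q`. The products of eigenvalues of
`D_G ⊗ D_H` are `r²`, `rs`, `s²`, all at least `-q`, whence `q P ⊗ P + D_G ⊗ D_H` is positive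
semidefinite. Adding a multiple of `J ⊗ J`, one gets a matrix constant on the pairs of pairs in
the same relation and zero elsewhere.

A quantum isomorphism `(P_gh)` intertwines the adjacency matrices:
`S(g, h) := ∑_{h' ∼ h} P_gh' = ∑_{g' ∼ g} P_g'h`. For a triangle `abc` of `G`, the second
expression shows that `∑_h S(a, h) S(b, h) S(c, h)` is the number of common neighbours of `a`, `b`,
`c` times the identity, while by the first one its trace is a sum of terms supported on triangles
of `H` with a common neighbour. So if `G` contains a `K₄`, so does `H`; but the `4 × 4` rook graph
contains a `K₄` and the Shrikhande graph does not.
-/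

open SimpleGraph
open scoped Kronecker

lemma posSemidef_of_mul_self_eq_smul {ι : Type*} [Fintype ι] {X : Matrix ι ι ℝ}
    (hX : X.IsHermitian) {c : ℝ} (hc : 0 < c) (hmul : X * X = c • X) : X.PosSemidef := by
  have hgram : X = c⁻¹ • (Xᴴ * X) := by rw [hX.eq, hmul, inv_smul_smul₀ hc.ne']
  rw [hgram]
  exact (posSemidef_conjTranspose_mul_self X).smul (inv_nonneg.2 hc.le)

lemma posSemidef_of_one {ι : Type*} [Finite ι] : (of 1 : Matrix ι ι ℝ).PosSemidef := by
  convert! posSemidef_vecMulVec_self_star (1 : ι → ℝ)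
  ext i j
  simp [vecMulVec_apply]

lemma exists_roots_of_opposite_sign (t : ℝ) {q : ℝ} (hq : 0 < q) :
    ∃ r s : ℝ, 0 < r ∧ s < 0 ∧ r + s = t ∧ r * s = -q := by
  have hlt : |t| < √(t ^ 2 + 4 * q) :=
    Real.lt_sqrt_of_sq_lt (by rw [sq_abs]; linarith)
  have hsq : √(t ^ 2 + 4 * q) ^ 2 = t ^ 2 + 4 * q := Real.sq_sqrt (by positivity)
  refine ⟨(t + √(t ^ 2 + 4 * q)) / 2, (t - √(t ^ 2 + 4 * q)) / 2, ?_, ?_, by ring, ?_⟩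
  · linarith [neg_abs_le t]
  · linarith [le_abs_self t]
  · linear_combination -hsq / 4

/-- `D` is a symmetric matrix in the corner of the symmetric idempotent `P` and is a root of
`X² - tX - q` there, `P` being the unit of the corner: its eigenvalues on the range of `P` are
roots of this polynomial. -/
structure IsQuadraticOver {ι : Type*} [Fintype ι] (P D : Matrix ι ι ℝ) (t q : ℝ) : Prop where
  isHermitian_unit : P.IsHermitian
  isHermitian : D.IsHermitian
  unit_mul_unit : P * P = P
  mul_unit : D * P = D
  mul_self : D * D = t • D + q • P

namespace IsQuadraticOver

variable {ι κ : Type*} [Fintype ι] [Fintype κ] {P D : Matrix ι ι ℝ} {P' D' : Matrix κ κ ℝ}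
  {t q r s : ℝ}

lemma unit_mul (hD : IsQuadraticOver P D t q) : P * D = D := by
  simpa only [conjTranspose_mul, hD.isHermitian.eq, hD.isHermitian_unit.eq] using
    congr($(hD.mul_unit)ᴴ)

lemma posSemidef_sub_smul (hD : IsQuadraticOver P D t q) (hsr : s < r) (hadd : r + s = t)
    (hmul : r * s = -q) : (D - s • P).PosSemidef := by
  refine posSemidef_of_mul_self_eq_smul
    (hD.isHermitian.sub (hD.isHermitian_unit.smul (IsSelfAdjoint.all s))) (sub_pos.2 hsr) ?_
  simp only [sub_mul, mul_sub, smul_mul_assoc, mul_smul_comm, hD.mul_self, hD.unit_mul,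
    hD.mul_unit, hD.unit_mul_unit]
  match_scalars
  · linear_combination -hadd
  · linear_combination hmul

lemma neg (hD : IsQuadraticOver P D t q) : IsQuadraticOver P (-D) (-t) q where
  isHermitian_unit := hD.isHermitian_unit
  isHermitian := hD.isHermitian.neg
  unit_mul_unit := hD.unit_mul_unit
  mul_unit := by rw [neg_mul, hD.mul_unit]
  mul_self := by rw [neg_mul_neg, neg_smul_neg, hD.mul_self]

theorem posSemidef_kronecker_add (hD : IsQuadraticOver P D t q) (hD' : IsQuadraticOver P' D' t q)
    (hq : 0 < q) : (P ⊗ₖ P' + q⁻¹ • D ⊗ₖ D').PosSemidef := by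
  obtain ⟨r, s, hr, hs, hadd, hmul⟩ := exists_roots_of_opposite_sign t hq
  have hsr : 0 < r - s := sub_pos.2 (hs.trans hr)
  have hadd_neg : -s + -r = -t := by linarith
  have hmul_neg : -s * -r = -q := by linarith
  have hdecomp : P ⊗ₖ P' + q⁻¹ • D ⊗ₖ D' =
      (q * (r - s))⁻¹ • (r • (D - s • P) ⊗ₖ (D' - s • P') +
        (-s) • (-D - -r • P) ⊗ₖ (-D' - -r • P')) := by
    ext ⟨i, j⟩ ⟨i', j'⟩
    simp only [Matrix.add_apply, Matrix.sub_apply, Matrix.neg_apply, Matrix.smul_apply,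
      kroneckerMap_apply, smul_eq_mul]
    field_simp
    linear_combination (P i i' * P' j j' * (r - s)) * hmul
  have hpos : ((D - s • P) ⊗ₖ (D' - s • P')).PosSemidef :=
    (hD.posSemidef_sub_smul (sub_pos.1 hsr) hadd hmul).kronecker
      (hD'.posSemidef_sub_smul (sub_pos.1 hsr) hadd hmul)
  have hneg : ((-D - -r • P) ⊗ₖ (-D' - -r • P')).PosSemidef :=
    (hD.neg.posSemidef_sub_smul (by linarith) hadd_neg hmul_neg).kronecker
      (hD'.neg.posSemidef_sub_smul (by linarith) hadd_neg hmul_neg)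
  rw [hdecomp]
  exact ((hpos.smul hr.le).add (hneg.smul (neg_nonneg.2 hs.le))).smul
    (inv_nonneg.2 (mul_pos hq hsr).le)

end IsQuadraticOver

section AllOnes

variable {α : Type*} [Fintype α]

lemma of_one_mul_of_one : (of 1 * of 1 : Matrix α α ℝ) = (Fintype.card α : ℝ) • of 1 := by
  ext i j
  simp [mul_apply]

lemma sum_row_eq_zero_of_mul_of_one {X : Matrix α α ℝ} (hX : X * of 1 = 0) (i : α) :
    ∑ j, X i j = 0 := by
  simpa [mul_apply] using congr_fun₂ hX i i

/-- The orthogonal projection `1 - J / n` onto the complement of the constant vectors. -/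
noncomputable def centeringMatrix (α : Type*) [Fintype α] [DecidableEq α] : Matrix α α ℝ :=
  1 - (Fintype.card α : ℝ)⁻¹ • of 1

variable [DecidableEq α]

lemma centeringMatrix_apply (i j : α) :
    centeringMatrix α i j = (if i = j then 1 else 0) - (Fintype.card α : ℝ)⁻¹ := by
  simp [centeringMatrix, one_apply]

lemma isHermitian_centeringMatrix : (centeringMatrix α).IsHermitian :=
  isHermitian_one.sub (posSemidef_of_one.isHermitian.smul (IsSelfAdjoint.all _))

lemma centeringMatrix_mul_of_one : centeringMatrix α * of 1 = 0 := by
  rw [centeringMatrix, sub_mul, one_mul, smul_mul_assoc, of_one_mul_of_one, smul_smul]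
  ext i j
  have hn : (Fintype.card α : ℝ) ≠ 0 := Nat.cast_ne_zero.2 (Fintype.card_pos_iff.2 ⟨i⟩).ne'
  simp [hn]

lemma centeringMatrix_mul_self : centeringMatrix α * centeringMatrix α = centeringMatrix α := by
  nth_rw 2 [centeringMatrix]
  rw [mul_sub, mul_one, mul_smul_comm, centeringMatrix_mul_of_one, smul_zero, sub_zero]

lemma mul_centeringMatrix {X : Matrix α α ℝ} (hX : X * of 1 = 0) : X * centeringMatrix α = X := by
  rw [centeringMatrix, mul_sub, mul_one, mul_smul_comm, hX, smul_zero, sub_zero]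

end AllOnes

section AdjMatrix

variable {α : Type*} [Fintype α] {G : SimpleGraph α} [DecidableRel G.Adj] {n k ℓ μ : ℕ}

lemma adjMatrix_mul_of_one (hG : G.IsRegularOfDegree k) :
    G.adjMatrix ℝ * of 1 = (k : ℝ) • of 1 := by
  ext i j
  simp [adjMatrix_mul_apply, hG.degree_eq i]

lemma of_one_mul_adjMatrix (hG : G.IsRegularOfDegree k) :
    of 1 * G.adjMatrix ℝ = (k : ℝ) • of 1 := by
  ext i j
  simp [mul_adjMatrix_apply, hG.degree_eq j]

lemma adjMatrix_mul_self [DecidableEq α] (hG : G.IsSRGWith n k ℓ μ) :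
    G.adjMatrix ℝ * G.adjMatrix ℝ =
      ((k : ℝ) - μ) • 1 + ((ℓ : ℝ) - μ) • G.adjMatrix ℝ + (μ : ℝ) • of 1 := by
  rw [← sq, hG.matrix_eq, ← one_add_adjMatrix_add_compl_adjMatrix_eq_of_one ℝ G,
    compl_adjMatrix_eq_adjMatrix_compl]
  module

lemma isSRGWith_cast_param_eq [Nonempty α] (hG : G.IsSRGWith n k ℓ μ) :
    (k : ℝ) * (k - ℓ - 1) = (n - k - 1) * μ := by
  classical
  have hsq := congr($(adjMatrix_mul_self hG) * (of 1 : Matrix α α ℝ))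
  simp only [mul_assoc, add_mul, smul_mul_assoc, mul_smul_comm, one_mul, of_one_mul_of_one,
    adjMatrix_mul_of_one hG.regular, hG.card] at hsq
  have hentry := congr_fun₂ hsq (Classical.arbitrary α) (Classical.arbitrary α)
  simp only [Matrix.smul_apply, Matrix.add_apply, of_apply, Pi.one_apply, smul_eq_mul,
    mul_one] at hentry
  linear_combination hentry

/-- The adjacency matrix of a `k`-regular graph projected orthogonally onto the matrices which
have zero trace and zero sum, scaled by `n - 1`: it is `n - 1 - k` on edges, `-k` on non-edges and
`0` on the diagonal. -/
noncomputable def tracelessAdjMatrix [DecidableEq α] (G : SimpleGraph α) [DecidableRel G.Adj]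
    (k : ℕ) : Matrix α α ℝ :=
  ((Fintype.card α : ℝ) - 1) • G.adjMatrix ℝ - (k : ℝ) • (of 1 - 1)

variable [DecidableEq α]

lemma tracelessAdjMatrix_apply (i j : α) :
    tracelessAdjMatrix G k i j =
      if i = j then 0 else if G.Adj i j then (Fintype.card α : ℝ) - 1 - k else -k := by
  by_cases hij : i = j
  · simp [tracelessAdjMatrix, hij]
  · by_cases hadj : G.Adj i j <;> simp [tracelessAdjMatrix, hij, hadj]

lemma isHermitian_tracelessAdjMatrix : (tracelessAdjMatrix G k).IsHermitian :=
  ((G.isHermitian_adjMatrix ℝ).smul (IsSelfAdjoint.all _)).sub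
    ((posSemidef_of_one.isHermitian.sub isHermitian_one).smul (IsSelfAdjoint.all _))

lemma tracelessAdjMatrix_mul_of_one (hG : G.IsRegularOfDegree k) :
    tracelessAdjMatrix G k * of 1 = 0 := by
  simp only [tracelessAdjMatrix, sub_mul, smul_mul_assoc, one_mul, of_one_mul_of_one,
    adjMatrix_mul_of_one hG]
  module

lemma tracelessAdjMatrix_mul_self [Nonempty α] (hG : G.IsSRGWith n k ℓ μ) :
    tracelessAdjMatrix G k * tracelessAdjMatrix G k =
      ((n - 1) * ((ℓ : ℝ) - μ) + 2 * k) • tracelessAdjMatrix G k +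
        (k * n * (n - 1 - k) : ℝ) • centeringMatrix α := by
  have hparam := isSRGWith_cast_param_eq hG
  have hn : (n : ℝ) ≠ 0 := by
    rw [← hG.card]
    exact Nat.cast_ne_zero.2 Fintype.card_ne_zero
  simp only [tracelessAdjMatrix, centeringMatrix, hG.card, mul_sub, sub_mul, smul_mul_assoc,
    mul_smul_comm, mul_one, one_mul, of_one_mul_of_one, adjMatrix_mul_of_one hG.regular,
    of_one_mul_adjMatrix hG.regular, adjMatrix_mul_self hG]
  match_scalars
  · linear_combination (n - 1 : ℝ) * hparam
  · ring
  · field_simp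
    linear_combination (1 - n : ℝ) * hparam

lemma isQuadraticOver_tracelessAdjMatrix [Nonempty α] (hG : G.IsSRGWith n k ℓ μ) :
    IsQuadraticOver (centeringMatrix α) (tracelessAdjMatrix G k)
      ((n - 1) * ((ℓ : ℝ) - μ) + 2 * k) (k * n * (n - 1 - k)) where
  isHermitian_unit := isHermitian_centeringMatrix
  isHermitian := isHermitian_tracelessAdjMatrix
  unit_mul_unit := centeringMatrix_mul_self
  mul_unit := mul_centeringMatrix (tracelessAdjMatrix_mul_of_one hG.regular)
  mul_self := tracelessAdjMatrix_mul_self hG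

end AdjMatrix

section SRGIsoMatrix

variable {α β : Type*} [Fintype α] [Fintype β] [DecidableEq α] [DecidableEq β]
  {G : SimpleGraph α} {H : SimpleGraph β} [DecidableRel G.Adj] [DecidableRel H.Adj] {n k ℓ μ : ℕ}

/-- The `DNN`-isomorphism matrix of two strongly regular graphs with parameters `(n, k, ℓ, μ)`,
for `0 < k < n - 1`. Its nonzero entries are `1 / n`, `1 / (nk)` and `1 / (n(n - 1 - k))`, at the
pairs of equal, adjacent and distinct non-adjacent vertices. -/
noncomputable def srgIsoMatrix (G : SimpleGraph α) (H : SimpleGraph β) [DecidableRel G.Adj]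
    [DecidableRel H.Adj] (n k : ℕ) : Matrix (α × β) (α × β) ℝ :=
  ((n : ℝ) ^ 2)⁻¹ • of 1 + ((n : ℝ) - 1)⁻¹ • (centeringMatrix α ⊗ₖ centeringMatrix β +
    ((k : ℝ) * n * (n - 1 - k))⁻¹ • tracelessAdjMatrix G k ⊗ₖ tracelessAdjMatrix H k)

lemma srgIsoMatrix_apply (g g' : α) (h h' : β) :
    srgIsoMatrix G H n k (g, h) (g', h') =
      ((n : ℝ) ^ 2)⁻¹ + ((n : ℝ) - 1)⁻¹ * (centeringMatrix α g g' * centeringMatrix β h h' +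
        ((k : ℝ) * n * (n - 1 - k))⁻¹ *
          (tracelessAdjMatrix G k g g' * tracelessAdjMatrix H k h h')) := by
  simp only [srgIsoMatrix, Matrix.add_apply, Matrix.smul_apply, kroneckerMap_apply, of_apply,
    Pi.one_apply, smul_eq_mul, mul_one]

lemma posSemidef_srgIsoMatrix (hG : G.IsSRGWith n k ℓ μ) (hH : H.IsSRGWith n k ℓ μ) (hk : 0 < k)
    (hkn : k + 1 < n) : (srgIsoMatrix G H n k).PosSemidef := by
  have : Nonempty α := Fintype.card_pos_iff.1 (by rw [hG.card]; lia)
  have : Nonempty β := Fintype.card_pos_iff.1 (by rw [hH.card]; lia)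
  have hk' : (0 : ℝ) < k := Nat.cast_pos.2 hk
  have hkn' : (k : ℝ) + 1 < n := by exact_mod_cast hkn
  have hq : (0 : ℝ) < k * n * (n - 1 - k) :=
    mul_pos (mul_pos hk' (by linarith)) (by linarith)
  exact (posSemidef_of_one.smul (by positivity)).add
    (((isQuadraticOver_tracelessAdjMatrix hG).posSemidef_kronecker_add
      (isQuadraticOver_tracelessAdjMatrix hH) hq).smul (inv_nonneg.2 (by linarith)))

lemma sum_sum_srgIsoMatrix_right (hcard : Fintype.card β = n) (hH : H.IsRegularOfDegree k)
    (hn : n ≠ 0) (g g' : α) :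
    ∑ h, ∑ h', srgIsoMatrix G H n k (g, h) (g', h') = 1 := by
  have hn' : (n : ℝ) ≠ 0 := Nat.cast_ne_zero.2 hn
  simp only [srgIsoMatrix_apply, Finset.sum_add_distrib, ← Finset.mul_sum,
    sum_row_eq_zero_of_mul_of_one centeringMatrix_mul_of_one,
    sum_row_eq_zero_of_mul_of_one (tracelessAdjMatrix_mul_of_one hH), Finset.sum_const,
    Finset.card_univ, hcard, nsmul_eq_mul]
  field

lemma sum_sum_srgIsoMatrix_left (hcard : Fintype.card α = n) (hG : G.IsRegularOfDegree k)
    (hn : n ≠ 0) (h h' : β) :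
    ∑ g, ∑ g', srgIsoMatrix G H n k (g, h) (g', h') = 1 := by
  have hn' : (n : ℝ) ≠ 0 := Nat.cast_ne_zero.2 hn
  simp only [srgIsoMatrix_apply, Finset.sum_add_distrib, ← Finset.mul_sum, ← Finset.sum_mul,
    sum_row_eq_zero_of_mul_of_one centeringMatrix_mul_of_one,
    sum_row_eq_zero_of_mul_of_one (tracelessAdjMatrix_mul_of_one hG), Finset.sum_const,
    Finset.card_univ, hcard, nsmul_eq_mul]
  field

lemma srgIsoMatrix_eq_zero (hα : Fintype.card α = n) (hβ : Fintype.card β = n) (hk : 0 < k)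
    (hkn : k + 1 < n) {g g' : α} {h h' : β} (hrel : ¬ relEq G H g g' h h') :
    srgIsoMatrix G H n k (g, h) (g', h') = 0 := by
  have hk' : (k : ℝ) ≠ 0 := Nat.cast_ne_zero.2 hk.ne'
  have hkn' : (k : ℝ) + 1 < n := by exact_mod_cast hkn
  have hn : (n : ℝ) ≠ 0 := by linarith [(Nat.cast_nonneg k : (0 : ℝ) ≤ k)]
  have hn_sub : (n : ℝ) - 1 ≠ 0 := by linarith [(Nat.cast_nonneg k : (0 : ℝ) ≤ k)]
  have hnk : (n : ℝ) - 1 - k ≠ 0 := by linarith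
  rw [srgIsoMatrix_apply]
  simp only [centeringMatrix_apply, tracelessAdjMatrix_apply, hα, hβ]
  by_cases hg : g = g' <;> by_cases hh : h = h'
  · exact (hrel (by simp [relEq, hg, hh])).elim
  · simp only [hg, hh, if_true, if_false]
    field
  · simp only [hg, hh, if_true, if_false]
    field
  · have hadj : ¬ (G.Adj g g' ↔ H.Adj h h') := by simpa [relEq, hg, hh] using hrel
    by_cases hG : G.Adj g g' <;> by_cases hH : H.Adj h h' <;>
      simp only [hG, hH, not_true, iff_self, iff_true, true_iff, hg, hh, if_true, if_false]
        at hadj ⊢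
    all_goals
      field_simp
      ring

lemma srgIsoMatrix_nonneg (hα : Fintype.card α = n) (hβ : Fintype.card β = n) (hk : 0 < k)
    (hkn : k + 1 < n) (p q : α × β) : 0 ≤ srgIsoMatrix G H n k p q := by
  obtain ⟨⟨g, h⟩, g', h'⟩ := p, q
  by_cases hrel : relEq G H g g' h h'
  · have hkn' : (k : ℝ) + 1 < n := by exact_mod_cast hkn
    have hn : (0 : ℝ) ≤ n - 1 := by linarith [(Nat.cast_nonneg k : (0 : ℝ) ≤ k)]
    have hnk : (0 : ℝ) ≤ n - 1 - k := by linarith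
    have hcentering : centeringMatrix α g g' = centeringMatrix β h h' := by
      simp only [centeringMatrix_apply, hα, hβ, hrel.1]
    have htraceless : tracelessAdjMatrix G k g g' = tracelessAdjMatrix H k h h' := by
      simp only [tracelessAdjMatrix_apply, hα, hβ, hrel.1, hrel.2]
    rw [srgIsoMatrix_apply, hcentering, htraceless]
    exact add_nonneg (by positivity) (mul_nonneg (inv_nonneg.2 hn) (add_nonneg (mul_self_nonneg _)
      (mul_nonneg (inv_nonneg.2 (mul_nonneg (by positivity) hnk)) (mul_self_nonneg _))))
  · rw [srgIsoMatrix_eq_zero hα hβ hk hkn hrel]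

end SRGIsoMatrix

theorem exists_dnn_iso_of_isSRGWith {α β : Type*} [Fintype α] [Fintype β] {G : SimpleGraph α}
    {H : SimpleGraph β} [DecidableRel G.Adj] [DecidableRel H.Adj] {n k ℓ μ : ℕ}
    (hG : G.IsSRGWith n k ℓ μ) (hH : H.IsSRGWith n k ℓ μ) (hk : 0 < k) (hkn : k + 1 < n) :
    ∃ M, IsIsoMatrix G H M ∧ M.PosSemidef ∧ ∀ p q, 0 ≤ M p q := by
  classical
  have hn : n ≠ 0 := by lia
  exact ⟨srgIsoMatrix G H n k,
    ⟨sum_sum_srgIsoMatrix_right hH.card hH.regular hn,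
      sum_sum_srgIsoMatrix_left hG.card hG.regular hn,
      fun _ _ _ _ => srgIsoMatrix_eq_zero hG.card hH.card hk hkn⟩,
    posSemidef_srgIsoMatrix hG hH hk hkn, srgIsoMatrix_nonneg hG.card hH.card hk hkn⟩

/-- A quantum isomorphism from `G` to `H` with entries in an arbitrary semiring. That the entries
are idempotent is not a field but a consequence, `IsQuantumIsoMatrix.isIdempotentElem`. -/
structure IsQuantumIsoMatrix {α β R : Type*} [Fintype α] [Fintype β] [Semiring R]
    (G : SimpleGraph α) (H : SimpleGraph β) (P : α → β → R) : Prop where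
  row_sum (g : α) : ∑ h, P g h = 1
  col_sum (h : β) : ∑ g, P g h = 1
  mul_eq_zero {g g' : α} {h h' : β} : ¬ relEq G H g g' h h' → P g h * P g' h' = 0

namespace IsQuantumIsoMatrix

section Semiring

variable {α β R : Type*} [Fintype α] [Fintype β] [Semiring R]
  {G : SimpleGraph α} {H : SimpleGraph β} {P : α → β → R} (hP : IsQuantumIsoMatrix G H P)

include hP

lemma mul_eq_zero_of_ne {g g' : α} (hne : g ≠ g') (h : β) : P g h * P g' h = 0 :=
  hP.mul_eq_zero fun hrel => hne (hrel.1.2 rfl)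

lemma isIdempotentElem (g : α) (h : β) : IsIdempotentElem (P g h) :=
  calc P g h * P g h = ∑ g', P g h * P g' h :=
        (Finset.sum_eq_single_of_mem g (Finset.mem_univ g) fun _ _ hne =>
          hP.mul_eq_zero_of_ne hne.symm h).symm
    _ = P g h := by rw [← Finset.mul_sum, hP.col_sum, mul_one]

lemma sum_mul_sum_eq_sum_inter [DecidableEq α] (s t : Finset α) (h : β) :
    (∑ g ∈ s, P g h) * ∑ g ∈ t, P g h = ∑ g ∈ s ∩ t, P g h := by
  have hrow (g : α) : P g h * ∑ g' ∈ t, P g' h = if g ∈ t then P g h else 0 := by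
    rw [Finset.mul_sum, ← Finset.sum_ite_eq t g fun g => P g h]
    refine Finset.sum_congr rfl fun g' _ => ?_
    split_ifs with heq
    · rw [← heq, hP.isIdempotentElem g h]
    · exact hP.mul_eq_zero_of_ne heq h
  rw [Finset.sum_mul, Finset.sum_congr rfl fun g _ => hrow g, Finset.sum_ite_mem]

variable [DecidableRel G.Adj] [DecidableRel H.Adj]

lemma sum_neighborFinset_eq (g : α) (h : β) :
    ∑ h' ∈ H.neighborFinset h, P g h' = ∑ g' ∈ G.neighborFinset g, P g' h := by
  have hcol {h' : β} (hh' : h' ∈ H.neighborFinset h) :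
      ∑ g' ∈ G.neighborFinset g, P g h' * P g' h = P g h' := by
    rw [Finset.sum_subset (Finset.subset_univ _) fun g' _ hg' => hP.mul_eq_zero fun hrel => hg' ?_,
      ← Finset.mul_sum, hP.col_sum, mul_one]
    exact (mem_neighborFinset ..).2 (hrel.2.2 ((mem_neighborFinset ..).1 hh').symm)
  have hrow {g' : α} (hg' : g' ∈ G.neighborFinset g) :
      ∑ h' ∈ H.neighborFinset h, P g h' * P g' h = P g' h := by
    rw [Finset.sum_subset (Finset.subset_univ _) fun h' _ hh' => hP.mul_eq_zero fun hrel => hh' ?_,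
      ← Finset.sum_mul, hP.row_sum, one_mul]
    exact (mem_neighborFinset ..).2 (hrel.2.1 ((mem_neighborFinset ..).1 hg')).symm
  calc ∑ h' ∈ H.neighborFinset h, P g h'
      = ∑ h' ∈ H.neighborFinset h, ∑ g' ∈ G.neighborFinset g, P g h' * P g' h :=
        Finset.sum_congr rfl fun _ hh' => (hcol hh').symm
    _ = ∑ g' ∈ G.neighborFinset g, ∑ h' ∈ H.neighborFinset h, P g h' * P g' h := Finset.sum_comm
    _ = ∑ g' ∈ G.neighborFinset g, P g' h := Finset.sum_congr rfl fun _ hg' => hrow hg'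

lemma sum_mul_mul_eq_card_nsmul_one [DecidableEq α] (a b c : α) :
    ∑ h, (∑ x ∈ H.neighborFinset h, P a x) * (∑ y ∈ H.neighborFinset h, P b y) *
        (∑ z ∈ H.neighborFinset h, P c z) =
      (G.neighborFinset a ∩ G.neighborFinset b ∩ G.neighborFinset c).card • (1 : R) := by
  simp only [hP.sum_neighborFinset_eq, hP.sum_mul_sum_eq_sum_inter]
  rw [Finset.sum_comm, Finset.sum_congr rfl fun g _ => hP.row_sum g, Finset.sum_const]

end Semiring

section Trace

variable {α β R A : Type*} [Fintype α] [Fintype β] [Semiring R] [AddCommMonoid A]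
  {G : SimpleGraph α} {H : SimpleGraph β} {P : α → β → R} {τ : R →+ A}

lemma trace_mul_mul_eq_zero (hP : IsQuantumIsoMatrix G H P) (hτ : ∀ x y, τ (x * y) = τ (y * x))
    {a b c : α} (hab : G.Adj a b) (hac : G.Adj a c) (hbc : G.Adj b c) {x y z : β}
    (hxyz : ¬ (H.Adj x y ∧ H.Adj x z ∧ H.Adj y z)) :
    τ (P a x * P b y * P c z) = 0 := by
  have hzero {g g' : α} {h h' : β} (hg : G.Adj g g') (hh : ¬ H.Adj h h') :
      P g h * P g' h' = 0 :=
    hP.mul_eq_zero fun hrel => hh (hrel.2.1 hg)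
  by_cases hxy : H.Adj x y
  · by_cases hyz : H.Adj y z
    · have hzx : ¬ H.Adj z x := fun hzx => hxyz ⟨hxy, hzx.symm, hyz⟩
      rw [hτ, ← mul_assoc, hzero hac.symm hzx, zero_mul, map_zero]
    · rw [mul_assoc, hzero hbc hyz, mul_zero, map_zero]
  · rw [hzero hab hxy, zero_mul, map_zero]

theorem cliqueFree_four [IsAddTorsionFree A] (hP : IsQuantumIsoMatrix G H P)
    (hτ : ∀ x y, τ (x * y) = τ (y * x)) (hτ_one : τ 1 ≠ 0) (hH : H.CliqueFree 4) :
    G.CliqueFree 4 := by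
  classical
  by_contra hG
  let f := topEmbeddingOfNotCliqueFree hG
  have hf {i j : Fin 4} (hij : i ≠ j) : G.Adj (f i) (f j) := f.map_adj_iff.2 hij
  have hneighbor : f 3 ∈ G.neighborFinset (f 0) ∩ G.neighborFinset (f 1) ∩
      G.neighborFinset (f 2) := by
    simp only [Finset.mem_inter, mem_neighborFinset]
    exact ⟨⟨hf (by decide), hf (by decide)⟩, hf (by decide)⟩
  have htrace (h : β) : τ ((∑ x ∈ H.neighborFinset h, P (f 0) x) *
      (∑ y ∈ H.neighborFinset h, P (f 1) y) * ∑ z ∈ H.neighborFinset h, P (f 2) z) = 0 := by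
    simp only [Finset.sum_mul, Finset.mul_sum, map_sum]
    refine Finset.sum_eq_zero fun x hx => Finset.sum_eq_zero fun y hy =>
      Finset.sum_eq_zero fun z hz => hP.trace_mul_mul_eq_zero hτ (hf (by decide))
        (hf (by decide)) (hf (by decide)) fun hxyz => ?_
    simp only [mem_neighborFinset] at hx hy hz
    exact hH _ ((is3Clique_triple_iff.2 hxyz).insert (a := h) (by simp [hx, hy, hz]))
  have hcard := congr(τ $(hP.sum_mul_mul_eq_card_nsmul_one (f 0) (f 1) (f 2)))
  rw [map_sum, Finset.sum_eq_zero fun h _ => htrace h, map_nsmul] at hcard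
  exact hτ_one ((nsmul_eq_zero_iff_right (Finset.card_ne_zero_of_mem hneighbor)).1 hcard.symm)

end Trace

end IsQuantumIsoMatrix

theorem QuantumIso.cliqueFree_four {α β : Type*} [Fintype α] [Fintype β] {G : SimpleGraph α}
    {H : SimpleGraph β} (hGH : QuantumIso G H) (hH : H.CliqueFree 4) : G.CliqueFree 4 := by
  obtain ⟨d, hd, P, -, hrow, hcol, horth⟩ := hGH
  have hP : IsQuantumIsoMatrix G H P := ⟨hrow, hcol, horth _ _ _ _⟩
  refine hP.cliqueFree_four (τ := traceAddMonoidHom (Fin d) ℂ) trace_mul_comm ?_ hH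
  simpa [trace_one] using hd.ne'

/-- Identifies `Fin 16` with the vertices of the `4 × 4` torus, row by row. -/
def gridEquiv : Fin 16 ≃ Fin 4 × Fin 4 :=
  (finProdFinEquiv (m := 4) (n := 4)).symm

/-- The `4 × 4` rook graph `K₄ □ K₄`. -/
def rookGraph : SimpleGraph (Fin 16) :=
  ((⊤ : SimpleGraph (Fin 4)) □ (⊤ : SimpleGraph (Fin 4))).comap gridEquiv

/-- The Shrikhande graph, as a Cayley graph of `(ℤ/4)²`. -/
def shrikhandeGraph : SimpleGraph (Fin 16) :=
  (circulantGraph {(0, 1), (1, 0), (1, 1)}).comap gridEquiv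

instance : DecidableRel rookGraph.Adj := fun _ _ => decidable_of_iff' _ boxProd_adj

instance : DecidableRel shrikhandeGraph.Adj := fun i j =>
  inferInstanceAs <| Decidable <|
    (circulantGraph {(0, 1), (1, 0), (1, 1)}).Adj (gridEquiv i) (gridEquiv j)

lemma rookGraph_isSRGWith : rookGraph.IsSRGWith 16 6 2 2 where
  card := Fintype.card_fin 16
  regular v := by decide +kernel +revert
  of_adj := by decide +kernel
  of_not_adj v w := by decide +kernel +revert

lemma shrikhandeGraph_isSRGWith : shrikhandeGraph.IsSRGWith 16 6 2 2 where
  card := Fintype.card_fin 16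
  regular v := by decide +kernel +revert
  of_adj := by decide +kernel
  of_not_adj v w := by decide +kernel +revert

lemma not_cliqueFree_four_rookGraph : ¬ rookGraph.CliqueFree 4 :=
  fun hfree => hfree {0, 1, 2, 3} (by decide +kernel)

lemma cliqueFree_four_shrikhandeGraph : shrikhandeGraph.CliqueFree 4 := by
  have hfour : ∀ a b, shrikhandeGraph.Adj a b → ∀ c, shrikhandeGraph.Adj a c →
      shrikhandeGraph.Adj b c → ∀ d, shrikhandeGraph.Adj a d → shrikhandeGraph.Adj b d →
        ¬ shrikhandeGraph.Adj c d := by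
    decide +kernel
  by_contra hclique
  let f := topEmbeddingOfNotCliqueFree hclique
  have hf (i j : Fin 4) (hij : i ≠ j := by decide) : shrikhandeGraph.Adj (f i) (f j) :=
    f.map_adj_iff.2 hij
  exact hfour (f 0) (f 1) (hf 0 1) (f 2) (hf 0 2) (hf 1 2) (f 3) (hf 0 3) (hf 1 3) (hf 2 3)

/-- There are graphs on 16 vertices which are `DNN`-isomorphic but not quantum
isomorphic. -/
theorem exists_dnn_iso_not_quantum_iso :
    ∃ G H : SimpleGraph (Fin 16),
      (∃ M, IsIsoMatrix G H M ∧ M.PosSemidef ∧ ∀ p q, 0 ≤ M p q) ∧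
      ¬ QuantumIso G H := by
  refine ⟨rookGraph, shrikhandeGraph, ?_, fun hquantum => ?_⟩
  · exact exists_dnn_iso_of_isSRGWith rookGraph_isSRGWith shrikhandeGraph_isSRGWith
      (by norm_num) (by norm_num)
  · exact not_cliqueFree_four_rookGraph (hquantum.cliqueFree_four cliqueFree_four_shrikhandeGraph)
end

section
/- Let G be a connected 1-walk-regular finite simple graph. Then for any finite simple graph H, G ≅_{S+} H if and only if H is a connected 1-walk-regular graph that is cospectral to G (the adjacency matrices of G and H have the same characteristic polynomial). -/
open Matrix BigOperators

/-- `G` is walk-regular: the diagonal of every power of its adjacency matrix is constant,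
i.e. `I ∘ A^ℓ = a_ℓ I` for some number `a_ℓ`. -/
def WalkRegular {V : Type*} [Fintype V] [DecidableEq V]
    (G : SimpleGraph V) [DecidableRel G.Adj] : Prop :=
  ∀ ℓ : ℕ, ∃ a : ℝ,
    Matrix.hadamard (1 : Matrix V V ℝ) ((G.adjMatrix ℝ) ^ ℓ) = a • (1 : Matrix V V ℝ)

/-- `G` is 1-walk-regular: it is walk-regular and `A ∘ A^ℓ = b_ℓ A` for some `b_ℓ`. -/
def OneWalkRegular {V : Type*} [Fintype V] [DecidableEq V]
    (G : SimpleGraph V) [DecidableRel G.Adj] : Prop :=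
  WalkRegular G ∧
  ∀ ℓ : ℕ, ∃ b : ℝ,
    Matrix.hadamard (G.adjMatrix ℝ) ((G.adjMatrix ℝ) ^ ℓ) = b • G.adjMatrix ℝ

/-!
A positive semidefinite isomorphism matrix `M` intertwines the adjacency matrices `A` and `B`: the
linear constraints give `tr (M (A² ⊗ 1)) = tr (M (A ⊗ B)) = tr (M (1 ⊗ B²))`, so
`tr (Cᴴ M C) = 0` for `C = A ⊗ 1 - 1 ⊗ B`, and positivity forces `M C = 0`. Hence
`M (p(A) ⊗ 1) = M (1 ⊗ p(B))` for every polynomial `p`. The full trace shows that `A` and `B` have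
the same power sums of eigenvalues, and the partial trace over the first factor carries over to
`p(B)` whichever of the patterns "constant on the diagonal", "constant on the edges" and "constant"
`p(A)` has. Connectedness is the last pattern: in a connected regular graph the projection onto the
constant vectors is a polynomial in `A`.

Conversely, by 1-walk-regularity each spectral idempotent of `A` is constant on the diagonal and on
the edges, with values determined by its eigenvalue and multiplicity. Therefore
`∑ μ, (E_A μ ⊗ E_B μ) / mult μ` reduces, on a row block indexed by a vertex or an edge of `G`, to a
multiple of `1` or of `B`, which vanishes where an isomorphism matrix must.
-/

open Polynomial
open scoped ComplexOrder Kronecker MatrixOrder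

lemma multiset_eq_of_sum_map_pow_eq {K : Type*} [Field K] [CharZero K] {s t : Multiset K}
    (h : ∀ l : ℕ, (s.map (· ^ l)).sum = (t.map (· ^ l)).sum) : s = t := by
  classical
  have sum_eval (p : K[X]) : (s.map p.eval).sum = (t.map p.eval).sum := by
    have eval_eq : p.eval = fun x ↦ ∑ l ∈ Finset.range (p.natDegree + 1), p.coeff l * x ^ l :=
      funext fun x ↦ Polynomial.eval_eq_sum_range x
    simp only [eval_eq, Multiset.sum_map_sum, Multiset.sum_map_mul_left, h]
  ext x
  let S : Finset K := insert x (s.toFinset ∪ t.toFinset)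
  have eval_basis (y : K) (hy : y ∈ S) :
      (Lagrange.basis S id x).eval y = if x = y then 1 else 0 := by
    split_ifs with hxy
    · rw [← hxy]
      exact Lagrange.eval_basis_self Function.injective_id.injOn (Finset.mem_insert_self x _)
    · exact Lagrange.eval_basis_of_ne (v := id) hxy hy
  have sum_basis {u : Multiset K} (hu : u.toFinset ⊆ S) :
      (u.map (Lagrange.basis S id x).eval).sum = u.count x := by
    rw [Multiset.map_congr rfl fun y hy ↦ eval_basis y (hu (Multiset.mem_toFinset.2 hy)),
      Finset.sum_multiset_map_count]
    simp +contextual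
  have hs : s.toFinset ⊆ S := Finset.subset_union_left.trans (Finset.subset_insert _ _)
  have ht : t.toFinset ⊆ S := Finset.subset_union_right.trans (Finset.subset_insert _ _)
  exact_mod_cast (sum_basis hs).symm.trans ((sum_eval _).trans (sum_basis ht))

lemma mul_eq_zero_of_trace_conjTranspose_mul_mul {𝕜 m n : Type*} [RCLike 𝕜]
    [Fintype m] [Fintype n] {A : Matrix m m 𝕜} (hA : A.PosSemidef) {C : Matrix m n 𝕜}
    (h : (Cᴴ * A * C).trace = 0) : A * C = 0 := by
  classical
  obtain ⟨N, rfl⟩ := CStarAlgebra.nonneg_iff_eq_star_mul_self.1 hA.nonneg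
  have hNC : N * C = 0 := by
    rw [← trace_conjTranspose_mul_self_eq_zero_iff, conjTranspose_mul, ← h, star_eq_conjTranspose]
    simp only [Matrix.mul_assoc]
  rw [Matrix.mul_assoc, hNC, Matrix.mul_zero]

section Hermitian

variable {𝕜 m n : Type*} [RCLike 𝕜] [Fintype m] [DecidableEq m] [Fintype n] [DecidableEq n]
  {A : Matrix m m 𝕜} {B : Matrix n n 𝕜}

lemma exists_aeval_eq_cfc (hA : A.IsHermitian) (f : ℝ → ℝ) :
    ∃ p : ℝ[X], aeval A p = cfc f A := by
  let S : Finset ℝ := A.finite_real_spectrum.toFinset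
  refine ⟨Lagrange.interpolate S id f, ?_⟩
  rw [← cfc_polynomial _ A hA.isSelfAdjoint]
  refine cfc_congr fun x hx ↦ ?_
  exact Lagrange.eval_interpolate_at_node f Function.injective_id.injOn
    (A.finite_real_spectrum.mem_toFinset.2 hx)

lemma trace_cfc (hA : A.IsHermitian) (f : ℝ → ℝ) :
    (cfc f A).trace = ∑ i, (f (hA.eigenvalues i) : 𝕜) := by
  rw [hA.cfc_eq, IsHermitian.cfc, Unitary.conjStarAlgAut_apply, trace_mul_cycle]
  simp [trace_diagonal]

lemma trace_pow_eq_sum_roots_charpoly (hA : A.IsHermitian) (l : ℕ) :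
    (A ^ l).trace = (A.charpoly.roots.map (· ^ l)).sum := by
  rw [← cfc_pow_id (R := ℝ) A l hA.isSelfAdjoint, trace_cfc hA, hA.roots_charpoly_eq_eigenvalues,
    Multiset.map_map]
  simp

lemma charpoly_eq_iff_trace_pow_eq (hA : A.IsHermitian) (hB : B.IsHermitian) :
    A.charpoly = B.charpoly ↔ ∀ l : ℕ, (A ^ l).trace = (B ^ l).trace := by
  simp only [trace_pow_eq_sum_roots_charpoly hA, trace_pow_eq_sum_roots_charpoly hB]
  refine ⟨fun h l ↦ by rw [h], fun h ↦ ?_⟩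
  rw [hA.splits_charpoly.eq_prod_roots_of_monic A.charpoly_monic,
    hB.splits_charpoly.eq_prod_roots_of_monic B.charpoly_monic,
    multiset_eq_of_sum_map_pow_eq h]

/-- The orthogonal projection onto the `μ`-eigenspace of a Hermitian matrix `A`. It is zero when `μ`
is not an eigenvalue of `A`, and, by the convention for `cfc`, when `A` is not Hermitian. -/
noncomputable def spectralIdempotent (A : Matrix m m 𝕜) (μ : ℝ) : Matrix m m 𝕜 :=
  cfc (Pi.single μ 1 : ℝ → ℝ) A

lemma spectralIdempotent_posSemidef (A : Matrix m m 𝕜) (μ : ℝ) :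
    (spectralIdempotent A μ).PosSemidef := by
  have single_nonneg : 0 ≤ (Pi.single μ 1 : ℝ → ℝ) := Pi.single_nonneg.2 zero_le_one
  exact Matrix.nonneg_iff_posSemidef.1 (cfc_nonneg fun x _ ↦ single_nonneg x)

lemma sum_smul_spectralIdempotent {S : Finset ℝ} (hS : spectrum ℝ A ⊆ S)
    (f : ℝ → ℝ) : ∑ μ ∈ S, f μ • spectralIdempotent A μ = cfc f A := by
  have continuousOn (g : ℝ → ℝ) : ContinuousOn g (spectrum ℝ A) :=
    A.finite_real_spectrum.continuousOn g
  have smul_eq (μ : ℝ) : f μ • spectralIdempotent A μ = cfc (f μ • Pi.single μ 1 : ℝ → ℝ) A :=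
    (cfc_smul _ _ A (continuousOn _)).symm
  rw [Finset.sum_congr rfl fun μ _ ↦ smul_eq μ, ← cfc_sum _ A S fun _ _ ↦ continuousOn _]
  refine cfc_congr fun x hx ↦ ?_
  simp [Pi.single_apply, Finset.mem_coe.1 (hS hx)]

lemma spectralIdempotent_mul (hA : A.IsHermitian) (μ : ℝ) :
    spectralIdempotent A μ * A = μ • spectralIdempotent A μ := by
  have continuousOn (g : ℝ → ℝ) : ContinuousOn g (spectrum ℝ A) :=
    A.finite_real_spectrum.continuousOn g
  nth_rw 2 [← cfc_id' ℝ A hA.isSelfAdjoint]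
  rw [spectralIdempotent, ← cfc_mul (hf := continuousOn _) (hg := continuousOn _),
    ← cfc_smul (hf := continuousOn _)]
  congr with x
  by_cases hx : x = μ <;> simp [hx]

lemma trace_spectralIdempotent (hA : A.IsHermitian) (μ : ℝ) :
    (spectralIdempotent A μ).trace = A.charpoly.rootMultiplicity (μ : 𝕜) := by
  classical
  rw [spectralIdempotent, trace_cfc hA, ← count_roots, hA.roots_charpoly_eq_eigenvalues]
  simp [Pi.single_apply, Multiset.count_map, Finset.card_def, eq_comm]

lemma spectralIdempotent_mulVec_of_ne (hA : A.IsHermitian) {v : m → 𝕜} {k μ : ℝ}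
    (hv : A *ᵥ v = k • v) (hμ : μ ≠ k) : spectralIdempotent A μ *ᵥ v = 0 := by
  have h : μ • (spectralIdempotent A μ *ᵥ v) = k • (spectralIdempotent A μ *ᵥ v) := by
    rw [← smul_mulVec, ← spectralIdempotent_mul hA, ← mulVec_mulVec, hv, mulVec_smul]
  by_contra hne
  exact hμ (smul_left_injective ℝ hne h)

lemma spectralIdempotent_mulVec_self (hA : A.IsHermitian) {v : m → 𝕜} {k : ℝ}
    (hv : A *ᵥ v = k • v) : spectralIdempotent A k *ᵥ v = v := by
  have sum_eq_one := sum_smul_spectralIdempotent (A := A)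
    (S := insert k A.finite_real_spectrum.toFinset) (by simp) fun _ ↦ 1
  rw [cfc_const_one ℝ A hA.isSelfAdjoint] at sum_eq_one
  simp only [one_smul] at sum_eq_one
  calc spectralIdempotent A k *ᵥ v
      = ∑ μ ∈ insert k A.finite_real_spectrum.toFinset, spectralIdempotent A μ *ᵥ v :=
        (Finset.sum_eq_single_of_mem k (Finset.mem_insert_self _ _)
          fun μ _ hμ ↦ spectralIdempotent_mulVec_of_ne hA hv hμ).symm
    _ = v := by rw [← sum_mulVec, sum_eq_one, one_mulVec]

end Hermitian

lemma card_eq_of_charpoly_eq {m n R : Type*} [CommRing R] [Nontrivial R] [Fintype m] [Fintype n]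
    [DecidableEq m] [DecidableEq n] {A : Matrix m m R} {B : Matrix n n R}
    (h : A.charpoly = B.charpoly) : Fintype.card m = Fintype.card n := by
  simpa using congrArg natDegree h

section Kronecker

variable {m n : Type*} [Fintype m] [Fintype n]

lemma trace_submatrix_swap_mul_kronecker {R : Type*} [CommSemiring R]
    (M : Matrix (m × n) (m × n) R) (X : Matrix m m R) (Y : Matrix n n R) :
    (M.submatrix Prod.swap Prod.swap * (Y ⊗ₖ X)).trace = (M * (X ⊗ₖ Y)).trace := by
  simp only [trace, diag_apply, mul_apply]
  refine Fintype.sum_equiv (Equiv.prodComm n m) _ _ fun x ↦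
    Fintype.sum_equiv (Equiv.prodComm n m) _ _ fun y ↦ ?_
  simp [mul_comm]

variable [DecidableEq m] [DecidableEq n]

/-- The matrix `∑ μ, (E_A μ ⊗ₖ E_B μ) / mult μ`, where `E_A` and `E_B` are the spectral idempotents
and `mult μ` is the multiplicity of the eigenvalue `μ` of `A`. For cospectral `A` and `B` it couples
their eigenspaces; it is the isomorphism matrix built from cospectral 1-walk-regular graphs. -/
noncomputable def spectralCoupling (A : Matrix m m ℝ) (B : Matrix n n ℝ) :
    Matrix (m × n) (m × n) ℝ :=
  ∑ μ ∈ A.charpoly.roots.toFinset,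
    (A.charpoly.rootMultiplicity μ : ℝ)⁻¹ • (spectralIdempotent A μ ⊗ₖ spectralIdempotent B μ)

lemma spectralCoupling_apply (A : Matrix m m ℝ) (B : Matrix n n ℝ) (i i' : m) (j j' : n) :
    spectralCoupling A B (i, j) (i', j') = ∑ μ ∈ A.charpoly.roots.toFinset,
      (A.charpoly.rootMultiplicity μ : ℝ)⁻¹ *
        (spectralIdempotent A μ i i' * spectralIdempotent B μ j j') := by
  simp [spectralCoupling, Matrix.sum_apply]

lemma spectralCoupling_posSemidef (A : Matrix m m ℝ) (B : Matrix n n ℝ) :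
    (spectralCoupling A B).PosSemidef :=
  posSemidef_sum _ fun μ _ ↦ ((spectralIdempotent_posSemidef A μ).kronecker
    (spectralIdempotent_posSemidef B μ)).smul (by positivity)

lemma spectralCoupling_submatrix_swap {A : Matrix m m ℝ} {B : Matrix n n ℝ}
    (h : A.charpoly = B.charpoly) :
    (spectralCoupling A B).submatrix Prod.swap Prod.swap = spectralCoupling B A := by
  ext ⟨j, i⟩ ⟨j', i'⟩
  simp only [submatrix_apply, Prod.swap_prod_mk, spectralCoupling_apply, h,
    mul_comm (spectralIdempotent A _ i i')]

lemma spectralCoupling_apply_eq_cfc {A : Matrix m m ℝ} {B : Matrix n n ℝ}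
    (h : A.charpoly = B.charpoly) {i i' : m} {t : ℝ → ℝ}
    (ht : ∀ μ, spectralIdempotent A μ i i' = t μ * A.charpoly.rootMultiplicity μ) (j j' : n) :
    spectralCoupling A B (i, j) (i', j') = cfc t B j j' := by
  have spectrum_subset : spectrum ℝ B ⊆ A.charpoly.roots.toFinset := fun μ hμ ↦ by
    simpa [h, B.charpoly_monic.ne_zero] using mem_spectrum_iff_isRoot_charpoly.1 hμ
  rw [spectralCoupling_apply, ← sum_smul_spectralIdempotent spectrum_subset, Matrix.sum_apply]
  refine Finset.sum_congr rfl fun μ hμ ↦ ?_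
  have mult_ne_zero : (A.charpoly.rootMultiplicity μ : ℝ) ≠ 0 := by
    simpa [← count_roots, Multiset.count_eq_zero] using hμ
  rw [ht, Matrix.smul_apply, smul_eq_mul]
  field_simp

lemma mul_kronecker_one_eq_mul_one_kronecker {𝕜 : Type*} [RCLike 𝕜]
    {M : Matrix (m × n) (m × n) 𝕜} (hM : M.PosSemidef)
    {A : Matrix m m 𝕜} {B : Matrix n n 𝕜} (hA : A.IsHermitian) (hB : B.IsHermitian)
    (h : (M * ((A * A) ⊗ₖ 1)).trace + (M * (1 ⊗ₖ (B * B))).trace = 2 * (M * (A ⊗ₖ B)).trace) :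
    M * (A ⊗ₖ 1) = M * (1 ⊗ₖ B) := by
  have conjTranspose_eq : (A ⊗ₖ (1 : Matrix n n 𝕜) - 1 ⊗ₖ B)ᴴ = A ⊗ₖ 1 - 1 ⊗ₖ B := by
    rw [conjTranspose_sub, conjTranspose_kronecker, conjTranspose_kronecker, hA.eq, hB.eq,
      conjTranspose_one, conjTranspose_one]
  rw [← sub_eq_zero, ← Matrix.mul_sub]
  refine mul_eq_zero_of_trace_conjTranspose_mul_mul hM ?_
  rw [conjTranspose_eq, trace_mul_cycle, trace_mul_comm]
  simp only [Matrix.mul_sub, Matrix.sub_mul, ← mul_kronecker_mul, Matrix.mul_one, Matrix.one_mul,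
    trace_sub]
  linear_combination h

lemma mul_aeval_kronecker_one_eq {R : Type*} [CommSemiring R] {M : Matrix (m × n) (m × n) R}
    {A : Matrix m m R} {B : Matrix n n R} (h : M * (A ⊗ₖ 1) = M * (1 ⊗ₖ B)) (p : R[X]) :
    M * (aeval A p ⊗ₖ 1) = M * (1 ⊗ₖ aeval B p) := by
  induction p using Polynomial.induction_on' with
  | add p q hp hq => simp [add_kronecker, kronecker_add, Matrix.mul_add, hp, hq]
  | monomial l a =>
    simp only [aeval_monomial, ← Algebra.smul_def, smul_kronecker, kronecker_smul,
      Matrix.mul_smul]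
    congr 1
    induction l with
    | zero => simp
    | succ l ih =>
      calc M * ((A ^ (l + 1)) ⊗ₖ 1) = M * (A ⊗ₖ 1) * ((A ^ l) ⊗ₖ 1) := by
            rw [Matrix.mul_assoc, ← mul_kronecker_mul, ← pow_succ', Matrix.one_mul]
        _ = M * ((A ^ l) ⊗ₖ 1) * (1 ⊗ₖ B) := by
            simp only [h, Matrix.mul_assoc, ← mul_kronecker_mul, Matrix.one_mul, Matrix.mul_one]
        _ = M * (1 ⊗ₖ (B ^ (l + 1))) := by
            rw [ih, Matrix.mul_assoc, ← mul_kronecker_mul, ← pow_succ, Matrix.one_mul]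

end Kronecker

section Graph

variable {V : Type*} [Fintype V] {G : SimpleGraph V} [DecidableRel G.Adj] {d : ℕ}

lemma adjMatrix_mulVec_one (hd : G.IsRegularOfDegree d) :
    G.adjMatrix ℝ *ᵥ 1 = (d : ℝ) • 1 := by
  ext v
  simpa using SimpleGraph.adjMatrix_mulVec_const_apply_of_regular (a := (1 : ℝ)) hd (v := v)

lemma eq_of_adjMatrix_mulVec_eq_smul (hG : G.Connected) (hd : G.IsRegularOfDegree d) {x : V → ℝ}
    (hx : G.adjMatrix ℝ *ᵥ x = (d : ℝ) • x) (v w : V) : x v = x w := by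
  classical
  refine (G.lapMatrix_mulVec_eq_zero_iff_forall_reachable.1 ?_) v w (hG v w)
  ext u
  rw [SimpleGraph.lapMatrix, sub_mulVec, Pi.sub_apply, G.degMatrix_mulVec_apply, hx, hd u]
  simp

lemma trace_adjMatrix_mul {R : Type*} [Semiring R] (hd : G.IsRegularOfDegree d) {Z : Matrix V V R}
    {b : R} (hZ : ∀ v w, G.Adj v w → Z v w = b) :
    (G.adjMatrix R * Z).trace = Fintype.card V * d * b := by
  have diag_eq (v : V) : (G.adjMatrix R * Z) v v = d * b := by
    rw [G.adjMatrix_mul_apply,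
      Finset.sum_congr rfl fun w hw ↦ hZ w v ((G.mem_neighborFinset v w).1 hw).symm]
    simp [hd v]
  simp [trace, diag_eq, mul_assoc]

variable [DecidableEq V]

lemma walkRegular_iff_aeval :
    WalkRegular G ↔ ∀ p : ℝ[X], ∃ a, ∀ v, aeval (G.adjMatrix ℝ) p v v = a := by
  refine ⟨fun hG p ↦ ?_, fun hG l ↦ ?_⟩
  · choose a ha using hG
    refine ⟨∑ l ∈ Finset.range (p.natDegree + 1), p.coeff l * a l, fun v ↦ ?_⟩
    have pow_apply_self (l : ℕ) : (G.adjMatrix ℝ ^ l) v v = a l := by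
      simpa using congrFun₂ (ha l) v v
    simp [aeval_eq_sum_range, Matrix.sum_apply, pow_apply_self]
  · obtain ⟨a, ha⟩ := hG (X ^ l)
    refine ⟨a, ?_⟩
    ext v w
    obtain rfl | hvw := eq_or_ne v w
    · simpa using ha v
    · simp [hvw]

lemma oneWalkRegular_iff_aeval : OneWalkRegular G ↔ WalkRegular G ∧
    ∀ p : ℝ[X], ∃ b, ∀ v w, G.Adj v w → aeval (G.adjMatrix ℝ) p v w = b := by
  refine and_congr_right fun _ ↦ ⟨fun hG p ↦ ?_, fun hG l ↦ ?_⟩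
  · choose b hb using hG
    refine ⟨∑ l ∈ Finset.range (p.natDegree + 1), p.coeff l * b l, fun v w hvw ↦ ?_⟩
    have pow_apply_of_adj (l : ℕ) : (G.adjMatrix ℝ ^ l) v w = b l := by
      simpa [hvw] using congrFun₂ (hb l) v w
    simp [aeval_eq_sum_range, Matrix.sum_apply, pow_apply_of_adj]
  · obtain ⟨b, hb⟩ := hG (X ^ l)
    refine ⟨b, ?_⟩
    ext v w
    by_cases hvw : G.Adj v w
    · simpa [hvw] using hb v w hvw
    · simp [hvw]

lemma reachable_of_aeval_adjMatrix_apply_ne_zero {p : ℝ[X]} {v w : V}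
    (h : aeval (G.adjMatrix ℝ) p v w ≠ 0) : G.Reachable v w := by
  rw [aeval_eq_sum_range, Matrix.sum_apply] at h
  obtain ⟨l, -, hl⟩ := Finset.exists_ne_zero_of_sum_ne_zero h
  have card_ne_zero := right_ne_zero_of_mul hl
  rw [G.adjMatrix_pow_apply_eq_card_walk, Nat.cast_ne_zero] at card_ne_zero
  exact ⟨(Fintype.card_pos_iff.1 (Nat.pos_of_ne_zero card_ne_zero)).some.1⟩

lemma WalkRegular.exists_isRegularOfDegree (hG : WalkRegular G) :
    ∃ d, G.IsRegularOfDegree d := by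
  obtain ⟨a, ha⟩ := walkRegular_iff_aeval.1 hG (X ^ 2)
  have degree_eq (v : V) : (G.degree v : ℝ) = a := by
    rw [← ha v, aeval_X_pow, sq, G.adjMatrix_mul_self_apply_self]
  exact ⟨⌊a⌋₊, fun v ↦ by rw [← degree_eq v, Nat.floor_natCast]⟩

lemma spectralIdempotent_degree_apply (hG : G.Connected) (hd : G.IsRegularOfDegree d) (v w : V) :
    spectralIdempotent (G.adjMatrix ℝ) d v w = (Fintype.card V : ℝ)⁻¹ := by
  have hA := G.isHermitian_adjMatrix ℝ
  set E := spectralIdempotent (G.adjMatrix ℝ) d with hE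
  have row_const (u x y : V) : E u x = E u y := by
    refine eq_of_adjMatrix_mulVec_eq_smul hG hd (x := E u) ?_ x y
    rw [← vecMul_transpose, SimpleGraph.transpose_adjMatrix]
    exact congrFun (spectralIdempotent_mul hA d) u
  have row_sum := congrFun (spectralIdempotent_mulVec_self hA (adjMatrix_mulVec_one hd)) v
  simp only [mulVec, dotProduct, ← hE, row_const v _ w, Pi.one_apply, mul_one, Finset.sum_const,
    Finset.card_univ, nsmul_eq_mul] at row_sum
  exact eq_inv_of_mul_eq_one_right row_sum

lemma rootMultiplicity_degree_charpoly (hG : G.Connected) (hd : G.IsRegularOfDegree d) :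
    (G.adjMatrix ℝ).charpoly.rootMultiplicity (d : ℝ) = 1 := by
  have := hG.nonempty
  have trace_eq := trace_spectralIdempotent (G.isHermitian_adjMatrix ℝ) d
  simp only [trace, diag_apply, spectralIdempotent_degree_apply hG hd, Finset.sum_const,
    Finset.card_univ, nsmul_eq_mul] at trace_eq
  rw [mul_inv_cancel₀ (by simp)] at trace_eq
  exact_mod_cast trace_eq.symm

lemma sum_spectralIdempotent_adjMatrix_apply (hd : G.IsRegularOfDegree d) (μ : ℝ) :
    ∑ v, ∑ w, spectralIdempotent (G.adjMatrix ℝ) μ v w =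
      if μ = d then (Fintype.card V : ℝ) else 0 := by
  have hA := G.isHermitian_adjMatrix ℝ
  have sum_eq : ∑ v, ∑ w, spectralIdempotent (G.adjMatrix ℝ) μ v w =
      ∑ v, (spectralIdempotent (G.adjMatrix ℝ) μ *ᵥ 1) v := by
    simp [mulVec, dotProduct]
  rw [sum_eq]
  split_ifs with hμ
  · simp [hμ, spectralIdempotent_mulVec_self hA (adjMatrix_mulVec_one hd)]
  · simp [spectralIdempotent_mulVec_of_ne hA (adjMatrix_mulVec_one hd) hμ]

lemma trace_adjMatrix_sq (hd : G.IsRegularOfDegree d) :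
    (G.adjMatrix ℝ ^ 2).trace = Fintype.card V * d := by
  rw [sq, trace_adjMatrix_mul hd (b := 1) fun v w hvw ↦ by simp [hvw], mul_one]

lemma WalkRegular.spectralIdempotent_apply_self (hG : WalkRegular G) (μ : ℝ) (v : V) :
    spectralIdempotent (G.adjMatrix ℝ) μ v v =
      (Fintype.card V : ℝ)⁻¹ * (G.adjMatrix ℝ).charpoly.rootMultiplicity μ := by
  have := Nonempty.intro v
  have hA := G.isHermitian_adjMatrix ℝ
  obtain ⟨p, hp⟩ := exists_aeval_eq_cfc hA (Pi.single μ 1)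
  obtain ⟨a, ha⟩ := walkRegular_iff_aeval.1 hG p
  have apply_self (w : V) : spectralIdempotent (G.adjMatrix ℝ) μ w w = a := by
    rw [spectralIdempotent, ← hp, ha]
  have trace_eq := trace_spectralIdempotent hA μ
  simp only [trace, diag_apply, apply_self, Finset.sum_const, Finset.card_univ,
    nsmul_eq_mul] at trace_eq
  rw [apply_self, eq_inv_mul_iff_mul_eq₀ (by simp)]
  exact trace_eq

lemma OneWalkRegular.spectralIdempotent_apply_of_adj (hG : OneWalkRegular G)
    (hd : G.IsRegularOfDegree d) (μ : ℝ) {v w : V} (hvw : G.Adj v w) :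
    spectralIdempotent (G.adjMatrix ℝ) μ v w =
      (Fintype.card V * d : ℝ)⁻¹ * μ * (G.adjMatrix ℝ).charpoly.rootMultiplicity μ := by
  have := Nonempty.intro v
  have hA := G.isHermitian_adjMatrix ℝ
  obtain ⟨p, hp⟩ := exists_aeval_eq_cfc hA (Pi.single μ 1)
  obtain ⟨b, hb⟩ := (oneWalkRegular_iff_aeval.1 hG).2 p
  rw [hp, ← spectralIdempotent] at hb
  have degree_ne_zero : (d : ℝ) ≠ 0 := by
    rw [← hd v]
    exact_mod_cast ((G.degree_pos_iff_exists_adj v).2 ⟨w, hvw⟩).ne'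
  have trace_eq := trace_adjMatrix_mul hd hb
  rw [trace_mul_comm, spectralIdempotent_mul hA, trace_smul, trace_spectralIdempotent hA,
    smul_eq_mul] at trace_eq
  rw [hb v w hvw, mul_assoc, eq_inv_mul_iff_mul_eq₀ (by simp [degree_ne_zero])]
  exact trace_eq.symm

end Graph

lemma relEq_comm {α β : Type*} {G : SimpleGraph α} {H : SimpleGraph β} {g g' : α} {h h' : β} :
    relEq G H g g' h h' ↔ relEq H G h h' g g' := by
  simp only [relEq, iff_comm]

namespace IsIsoMatrix

variable {α β : Type*} [Fintype α] [Fintype β] {G : SimpleGraph α} {H : SimpleGraph β}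
  {M : Matrix (α × β) (α × β) ℝ}

lemma swap (hM : IsIsoMatrix G H M) : IsIsoMatrix H G (M.submatrix Prod.swap Prod.swap) :=
  ⟨hM.2.1, hM.1, fun h h' g g' hr ↦ hM.2.2 g g' h h' (relEq_comm.not.1 hr)⟩

lemma sum_mul_eq (hM : IsIsoMatrix G H M) {X : Matrix α α ℝ} {c : ℝ} {h h' : β}
    (hX : ∀ g g', relEq G H g g' h h' → X g' g = c) :
    ∑ g, ∑ g', M (g, h) (g', h') * X g' g = c := by
  have mul_eq (g g' : α) : M (g, h) (g', h') * X g' g = M (g, h) (g', h') * c := by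
    by_cases hr : relEq G H g g' h h'
    · rw [hX g g' hr]
    · simp [hM.2.2 g g' h h' hr]
  simp only [mul_eq, ← Finset.sum_mul, hM.2.1, one_mul]

lemma trace_mul_kronecker (hM : IsIsoMatrix G H M) {X : Matrix α α ℝ} (Y : Matrix β β ℝ)
    {Z : Matrix β β ℝ} (hXZ : ∀ g g' h h', relEq G H g g' h h' → X g' g = Z h h') :
    (M * (X ⊗ₖ Y)).trace = (Z * Y).trace := by
  have sum_eq (h h' : β) :
      ∑ g, ∑ g', M (g, h) (g', h') * (X g' g * Y h' h) = Z h h' * Y h' h := by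
    simp only [← mul_assoc, ← Finset.sum_mul]
    rw [hM.sum_mul_eq fun g g' ↦ hXZ g g' h h']
  simp only [trace, diag_apply, mul_apply, kronecker_apply, Fintype.sum_prod_type, ← sum_eq]
  rw [Finset.sum_comm]
  refine Finset.sum_congr rfl fun h _ ↦ ?_
  exact (Finset.sum_congr rfl fun g _ ↦ Finset.sum_comm).trans Finset.sum_comm

lemma trace_mul_adjMatrix_kronecker_adjMatrix [DecidableRel G.Adj] [DecidableRel H.Adj]
    (hM : IsIsoMatrix G H M) :
    (M * (G.adjMatrix ℝ ⊗ₖ H.adjMatrix ℝ)).trace = (H.adjMatrix ℝ * H.adjMatrix ℝ).trace :=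
  hM.trace_mul_kronecker _ fun g g' h h' hr ↦ by
    simp [SimpleGraph.adj_comm, hr.2]

lemma trace_mul_one_kronecker [DecidableEq α] (hM : IsIsoMatrix G H M) (Y : Matrix β β ℝ) :
    (M * (1 ⊗ₖ Y)).trace = Y.trace := by
  classical
  rw [hM.trace_mul_kronecker Y (Z := 1) fun g g' h h' hr ↦ ?_, Matrix.one_mul]
  simp [one_apply, eq_comm, hr.1]

lemma trace_mul_kronecker_one [DecidableEq β] (hM : IsIsoMatrix G H M) (X : Matrix α α ℝ) :
    (M * (X ⊗ₖ 1)).trace = X.trace := by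
  rw [← trace_submatrix_swap_mul_kronecker, hM.swap.trace_mul_one_kronecker]

lemma sum_apply_diag [DecidableEq β] (hM : IsIsoMatrix G H M) (h h' : β) :
    ∑ g, M (g, h) (g, h') = (1 : Matrix β β ℝ) h h' := by
  classical
  have one_apply_eq (g g' : α) (hr : relEq G H g g' h h') :
      (1 : Matrix α α ℝ) g' g = (1 : Matrix β β ℝ) h h' := by
    simp [one_apply, eq_comm, hr.1]
  simpa [one_apply] using hM.sum_mul_eq one_apply_eq

section DecidableEq

variable [DecidableEq α] [DecidableEq β]

lemma apply_eq_of_mul_kronecker_eq (hM : IsIsoMatrix G H M) {X : Matrix α α ℝ} {Y : Matrix β β ℝ}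
    (hXY : M * (X ⊗ₖ 1) = M * (1 ⊗ₖ Y)) {c : ℝ} {h h' : β}
    (hX : ∀ g g', relEq G H g g' h h' → X g' g = c) : Y h h' = c := by
  have entry (g : α) :
      ∑ g', M (g, h) (g', h') * X g' g = ∑ k, M (g, h) (g, k) * Y k h' := by
    have := congrFun₂ hXY (g, h) (g, h')
    simpa [mul_apply, Fintype.sum_prod_type, one_apply] using this
  calc Y h h' = ∑ k, (1 : Matrix β β ℝ) h k * Y k h' := by simp [one_apply]
    _ = ∑ g, ∑ k, M (g, h) (g, k) * Y k h' := by
      simp only [← hM.sum_apply_diag, Finset.sum_mul]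
      exact Finset.sum_comm
    _ = c := by simp only [← entry, hM.sum_mul_eq hX]

variable [DecidableRel G.Adj] [DecidableRel H.Adj]

lemma mul_aeval_adjMatrix_eq (hM : IsIsoMatrix G H M) (hpos : M.PosSemidef) (p : ℝ[X]) :
    M * (aeval (G.adjMatrix ℝ) p ⊗ₖ 1) = M * (1 ⊗ₖ aeval (H.adjMatrix ℝ) p) := by
  refine mul_aeval_kronecker_one_eq (mul_kronecker_one_eq_mul_one_kronecker hpos
    (G.isHermitian_adjMatrix ℝ) (H.isHermitian_adjMatrix ℝ) ?_) p
  have trace_eq := hM.swap.trace_mul_adjMatrix_kronecker_adjMatrix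
  rw [trace_submatrix_swap_mul_kronecker] at trace_eq
  rw [hM.trace_mul_kronecker_one, hM.trace_mul_one_kronecker, ← trace_eq,
    ← hM.trace_mul_adjMatrix_kronecker_adjMatrix, two_mul]

lemma aeval_adjMatrix_apply_eq (hM : IsIsoMatrix G H M) (hpos : M.PosSemidef) {p : ℝ[X]} {c : ℝ}
    {h h' : β} (hp : ∀ g g', relEq G H g g' h h' → aeval (G.adjMatrix ℝ) p g' g = c) :
    aeval (H.adjMatrix ℝ) p h h' = c :=
  hM.apply_eq_of_mul_kronecker_eq (hM.mul_aeval_adjMatrix_eq hpos p) hp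

lemma trace_adjMatrix_pow_eq (hM : IsIsoMatrix G H M) (hpos : M.PosSemidef) (l : ℕ) :
    (G.adjMatrix ℝ ^ l).trace = (H.adjMatrix ℝ ^ l).trace := by
  have trace_eq := congrArg trace (hM.mul_aeval_adjMatrix_eq hpos (X ^ l))
  simpa only [hM.trace_mul_kronecker_one, hM.trace_mul_one_kronecker, aeval_X_pow] using trace_eq

lemma charpoly_adjMatrix_eq (hM : IsIsoMatrix G H M) (hpos : M.PosSemidef) :
    (G.adjMatrix ℝ).charpoly = (H.adjMatrix ℝ).charpoly :=
  (charpoly_eq_iff_trace_pow_eq (G.isHermitian_adjMatrix ℝ) (H.isHermitian_adjMatrix ℝ)).2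
    (hM.trace_adjMatrix_pow_eq hpos)

lemma walkRegular (hM : IsIsoMatrix G H M) (hpos : M.PosSemidef) (hG : WalkRegular G) :
    WalkRegular H := by
  refine walkRegular_iff_aeval.2 fun p ↦ ?_
  obtain ⟨a, ha⟩ := walkRegular_iff_aeval.1 hG p
  refine ⟨a, fun h ↦ hM.aeval_adjMatrix_apply_eq hpos fun g g' hr ↦ ?_⟩
  rw [hr.1.2 rfl, ha]

lemma oneWalkRegular (hM : IsIsoMatrix G H M) (hpos : M.PosSemidef) (hG : OneWalkRegular G) :
    OneWalkRegular H := by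
  refine oneWalkRegular_iff_aeval.2 ⟨hM.walkRegular hpos hG.1, fun p ↦ ?_⟩
  obtain ⟨b, hb⟩ := (oneWalkRegular_iff_aeval.1 hG).2 p
  exact ⟨b, fun h h' hh' ↦ hM.aeval_adjMatrix_apply_eq hpos fun g g' hr ↦
    hb g' g (hr.2.2 hh').symm⟩

end DecidableEq

lemma connected [DecidableRel G.Adj] (hM : IsIsoMatrix G H M) (hpos : M.PosSemidef)
    (hGconn : G.Connected) {d : ℕ} (hd : G.IsRegularOfDegree d) : H.Connected := by
  classical
  have := hGconn.nonempty
  obtain ⟨p, hp⟩ := exists_aeval_eq_cfc (G.isHermitian_adjMatrix ℝ) (Pi.single (d : ℝ) 1)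
  have aeval_apply (h h' : β) : aeval (H.adjMatrix ℝ) p h h' = (Fintype.card α : ℝ)⁻¹ :=
    hM.aeval_adjMatrix_apply_eq hpos fun g g' _ ↦ by
      rw [hp, ← spectralIdempotent, spectralIdempotent_degree_apply hGconn hd]
  have reachable (h h' : β) : H.Reachable h h' :=
    reachable_of_aeval_adjMatrix_apply_ne_zero (p := p) (by simp [aeval_apply])
  have nonempty : Nonempty β := by
    rw [← Fintype.card_pos_iff, ← Nat.cast_pos (α := ℝ)]
    have card_eq : (Fintype.card α : ℝ) = Fintype.card β := by
      simpa using hM.trace_adjMatrix_pow_eq hpos 0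
    simp [← card_eq, Fintype.card_pos]
  exact ⟨reachable⟩

end IsIsoMatrix

section Coupling

variable {α β : Type*} [Fintype α] [Fintype β] [DecidableEq α] [DecidableEq β]
  {G : SimpleGraph α} {H : SimpleGraph β} [DecidableRel G.Adj] [DecidableRel H.Adj] {d : ℕ}

lemma degree_eq_of_charpoly_adjMatrix_eq {e : ℕ} [Nonempty α]
    (hG : G.IsRegularOfDegree d) (hH : H.IsRegularOfDegree e)
    (h : (G.adjMatrix ℝ).charpoly = (H.adjMatrix ℝ).charpoly) : d = e := by
  have trace_eq := (charpoly_eq_iff_trace_pow_eq (G.isHermitian_adjMatrix ℝ)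
    (H.isHermitian_adjMatrix ℝ)).1 h 2
  rw [trace_adjMatrix_sq hG, trace_adjMatrix_sq hH, ← card_eq_of_charpoly_eq h] at trace_eq
  exact_mod_cast mul_left_cancel₀ (by simp) trace_eq

lemma sum_spectralCoupling_adjMatrix_apply (hGconn : G.Connected) (hGd : G.IsRegularOfDegree d)
    (hHd : H.IsRegularOfDegree d) (h : (G.adjMatrix ℝ).charpoly = (H.adjMatrix ℝ).charpoly)
    (g g' : α) :
    ∑ k, ∑ k', spectralCoupling (G.adjMatrix ℝ) (H.adjMatrix ℝ) (g, k) (g', k') = 1 := by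
  have := hGconn.nonempty
  have mult_eq_one := rootMultiplicity_degree_charpoly hGconn hGd
  have degree_mem_roots : (d : ℝ) ∈ (G.adjMatrix ℝ).charpoly.roots.toFinset := by
    rw [Multiset.mem_toFinset, ← Multiset.one_le_count_iff_mem, count_roots, mult_eq_one]
  simp only [spectralCoupling_apply]
  rw [Finset.sum_congr rfl fun _ _ ↦ Finset.sum_comm, Finset.sum_comm]
  simp only [← Finset.mul_sum, sum_spectralIdempotent_adjMatrix_apply hHd]
  simp [degree_mem_roots, mult_eq_one, spectralIdempotent_degree_apply hGconn hGd,
    ← card_eq_of_charpoly_eq h]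

lemma eq_of_spectralCoupling_adjMatrix_ne_zero (hG : WalkRegular G)
    (h : (G.adjMatrix ℝ).charpoly = (H.adjMatrix ℝ).charpoly) {g g' : α} {k k' : β}
    (hne : spectralCoupling (G.adjMatrix ℝ) (H.adjMatrix ℝ) (g, k) (g', k') ≠ 0)
    (hg : g = g') : k = k' := by
  subst hg
  rw [spectralCoupling_apply_eq_cfc h (hG.spectralIdempotent_apply_self · g),
    cfc_const _ _ (H.isHermitian_adjMatrix ℝ).isSelfAdjoint] at hne
  by_contra hkk'
  simp [algebraMap_matrix_apply, hkk'] at hne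

lemma adj_of_spectralCoupling_adjMatrix_ne_zero (hG : OneWalkRegular G)
    (hd : G.IsRegularOfDegree d) (h : (G.adjMatrix ℝ).charpoly = (H.adjMatrix ℝ).charpoly)
    {g g' : α} {k k' : β}
    (hne : spectralCoupling (G.adjMatrix ℝ) (H.adjMatrix ℝ) (g, k) (g', k') ≠ 0)
    (hg : G.Adj g g') : H.Adj k k' := by
  rw [spectralCoupling_apply_eq_cfc h fun μ ↦ hG.spectralIdempotent_apply_of_adj hd μ hg,
    cfc_const_mul_id _ _ (H.isHermitian_adjMatrix ℝ).isSelfAdjoint] at hne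
  by_contra hkk'
  simp [hkk'] at hne

lemma isIsoMatrix_spectralCoupling (hGconn : G.Connected) (hHconn : H.Connected)
    (hG : OneWalkRegular G) (hH : OneWalkRegular H)
    (h : (G.adjMatrix ℝ).charpoly = (H.adjMatrix ℝ).charpoly) :
    IsIsoMatrix G H (spectralCoupling (G.adjMatrix ℝ) (H.adjMatrix ℝ)) := by
  have := hGconn.nonempty
  obtain ⟨d, hGd⟩ := hG.1.exists_isRegularOfDegree
  obtain ⟨e, hHe⟩ := hH.1.exists_isRegularOfDegree
  obtain rfl := degree_eq_of_charpoly_adjMatrix_eq hGd hHe h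
  have swap_apply (g g' : α) (k k' : β) :
      spectralCoupling (G.adjMatrix ℝ) (H.adjMatrix ℝ) (g, k) (g', k') =
        spectralCoupling (H.adjMatrix ℝ) (G.adjMatrix ℝ) (k, g) (k', g') :=
    congrFun₂ (spectralCoupling_submatrix_swap h.symm).symm (g, k) (g', k')
  refine ⟨sum_spectralCoupling_adjMatrix_apply hGconn hGd hHe h, fun k k' ↦ ?_,
    fun g g' k k' ↦ not_imp_comm.1 fun hne ↦ ?_⟩
  · simp only [swap_apply, sum_spectralCoupling_adjMatrix_apply hHconn hHe hGd h.symm]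
  · have hne' := hne
    rw [swap_apply] at hne'
    exact ⟨⟨eq_of_spectralCoupling_adjMatrix_ne_zero hG.1 h hne,
        eq_of_spectralCoupling_adjMatrix_ne_zero hH.1 h.symm hne'⟩,
      adj_of_spectralCoupling_adjMatrix_ne_zero hG hGd h hne,
      adj_of_spectralCoupling_adjMatrix_ne_zero hH hHe h.symm hne'⟩

end Coupling

/-- For a connected 1-walk-regular graph `G`, a graph `H` is `S+`-isomorphic to `G`
iff `H` is connected, 1-walk-regular and cospectral to `G`. -/
theorem sPlus_iso_iff_of_oneWalkRegular {α β : Type*}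
    [Fintype α] [Fintype β] [DecidableEq α] [DecidableEq β]
    (G : SimpleGraph α) (H : SimpleGraph β)
    [DecidableRel G.Adj] [DecidableRel H.Adj]
    (hGconn : G.Connected) (hG1wr : OneWalkRegular G) :
    (∃ M, IsIsoMatrix G H M ∧ M.PosSemidef) ↔
      (H.Connected ∧ OneWalkRegular H ∧
        (G.adjMatrix ℝ).charpoly = (H.adjMatrix ℝ).charpoly) := by
  constructor
  · rintro ⟨M, hM, hpos⟩
    obtain ⟨d, hd⟩ := hG1wr.1.exists_isRegularOfDegree
    exact ⟨hM.connected hpos hGconn hd, hM.oneWalkRegular hpos hG1wr, hM.charpoly_adjMatrix_eq hpos⟩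
  · rintro ⟨hHconn, hH1wr, hcospec⟩
    exact ⟨spectralCoupling (G.adjMatrix ℝ) (H.adjMatrix ℝ),
      isIsoMatrix_spectralCoupling hGconn hHconn hG1wr hH1wr hcospec,
      spectralCoupling_posSemidef _ _⟩
end
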